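/- For every T > 0 and K > 0 there exist constants ε > 0 and C > 0, depending only on T and K, with the following property: whenever f₁, a₁, a₂, a₃, h ∈ ℝ satisfy |f₁| ≤ K, |a₁| ≤ K, |h| ≤ K, a₃ ≤ ε, a₂ ≥ −ε, and F(h) < 0 where F(y) = f₁ + a₁y + a₂y² + a₃y³, the backward ODE admits a continuous solution y : [0,T] → ℝ with y(t) = h + ∫_t^T F(y(s)) ds and −C ≤ y(t) ≤ h for all t ∈ [0,T]. -/

import Mathlib

open MeasureTheory Set

/-!
Reversing time turns the backward equation into the forward problem `z' = F(z)`, `z(0) = h`. Since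
`F(h) ≤ 0`, the constant `h` is an upper barrier. For the lower barrier take `-B` with
`B(t) = (K + 1) exp ((K + 2) t)`, and put `C = B(T)`: if `ε` is so small that `ε (C + C²) ≤ 1`, the
quadratic and cubic terms contribute at most `b` to `-F(-b)` for `0 < b ≤ C`, so that
`-F(-b) < (K + 2) b` when `K < b`, and `-B` is a strict subsolution. Solving the equation for `F`
truncated outside the region between the barriers gives a global solution that never leaves that
region, hence a solution of the original equation.
-/

open scoped NNReal

section Comparison

variable {a b : ℝ}

lemma hasDerivWithinAt_Ici_of_Icc {E : Type*} [NormedAddCommGroup E] [NormedSpace ℝ E]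
    {f : ℝ → E} {f' : E} {t : ℝ} (hf : HasDerivWithinAt f f' (Icc a b) t) (ht : t ∈ Ico a b) :
    HasDerivWithinAt f f' (Ici t) t :=
  (hf.mono (Icc_subset_Icc_left ht.1)).mono_of_mem_nhdsWithin (Icc_mem_nhdsGE ht.2)

lemma le_of_hasDerivWithinAt_lt_of_eq {f g f' g' : ℝ → ℝ}
    (hf : ∀ t ∈ Icc a b, HasDerivWithinAt f (f' t) (Icc a b) t)
    (hg : ∀ t ∈ Icc a b, HasDerivWithinAt g (g' t) (Icc a b) t)
    (hfg : f a ≤ g a) (hlt : ∀ t ∈ Ico a b, f t = g t → f' t < g' t) :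
    ∀ t ∈ Icc a b, f t ≤ g t :=
  image_le_of_deriv_right_lt_deriv_boundary'
    (HasDerivWithinAt.continuousOn hf)
    (fun t ht => hasDerivWithinAt_Ici_of_Icc (hf t (Ico_subset_Icc_self ht)) ht) hfg
    (HasDerivWithinAt.continuousOn hg)
    (fun t ht => hasDerivWithinAt_Ici_of_Icc (hg t (Ico_subset_Icc_self ht)) ht) hlt

end Comparison

section ForwardEquation

variable {a b : ℝ}

lemma exists_isIntegralCurveOn_Icc_of_lipschitzWith_of_bounded {E : Type*}
    [NormedAddCommGroup E] [NormedSpace ℝ E] [CompleteSpace E] {G : E → E} {k M : ℝ≥0}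
    (hG : LipschitzWith k G) (hM : ∀ x, ‖G x‖ ≤ M) (hab : a ≤ b) (x₀ : E) :
    ∃ z : ℝ → E, z a = x₀ ∧ IsIntegralCurveOn z (fun _ => G) (Icc a b) := by
  have hPL : IsPicardLindelof (fun _ => G) (⟨a, left_mem_Icc.2 hab⟩ : Icc a b) x₀
      (M * (b - a).toNNReal) 0 M k :=
    .of_time_independent (fun x _ => hM x) hG.lipschitzOnWith
      (by simp [hab])
  exact hPL.exists_eq_forall_mem_Icc_hasDerivWithinAt₀

lemma exists_isIntegralCurveOn_Icc_IccExtend {F : ℝ → ℝ} {l u : ℝ} (hF : LocallyLipschitz F)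
    (hlu : l ≤ u) (hab : a ≤ b) (x₀ : ℝ) :
    ∃ z : ℝ → ℝ, z a = x₀ ∧
      IsIntegralCurveOn z (fun _ => IccExtend hlu ((Icc l u).domRestrict F)) (Icc a b) := by
  obtain ⟨k, hk⟩ := (hF.locallyLipschitzOn (s := Icc l u)).exists_lipschitzOnWith_of_compact
    isCompact_Icc
  obtain ⟨M, hM⟩ := isCompact_Icc.exists_bound_of_continuousOn (hF.continuous.continuousOn
    (s := Icc l u))
  exact exists_isIntegralCurveOn_Icc_of_lipschitzWith_of_bounded (M := M.toNNReal)
    (hk.to_restrict.comp (LipschitzWith.projIcc hlu))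
    (fun x => (hM _ (projIcc l u hlu x).2).trans M.le_coe_toNNReal) hab x₀

theorem exists_isIntegralCurveOn_Icc_mem_Icc_of_subsolution {F β β' : ℝ → ℝ} {h : ℝ}
    (hF : LocallyLipschitz F) (hab : a ≤ b) (hFh : F h ≤ 0) (hβh : β a ≤ h)
    (hβ : ∀ t ∈ Icc a b, HasDerivWithinAt β (β' t) (Icc a b) t)
    (hsub : ∀ t ∈ Icc a b, β' t < F (β t)) :
    ∃ z : ℝ → ℝ, z a = h ∧ IsIntegralCurveOn z (fun _ => F) (Icc a b) ∧
      ∀ t ∈ Icc a b, z t ∈ Icc (β t) h := by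
  rcases hFh.eq_or_lt with hFh | hFh
  · have hβ_le : ∀ t ∈ Icc a b, β t ≤ h :=
      le_of_hasDerivWithinAt_lt_of_eq hβ (fun t _ => hasDerivWithinAt_const t _ h) hβh
        fun t ht heq => by simpa only [heq, hFh] using hsub t (Ico_subset_Icc_self ht)
    exact ⟨fun _ => h, rfl, (isIntegralCurve_const fun _ => hFh).isIntegralCurveOn _,
      fun t ht => ⟨hβ_le t ht, le_rfl⟩⟩
  obtain ⟨t₀, -, hmin⟩ := isCompact_Icc.exists_isMinOn (nonempty_Icc.2 hab)
    (HasDerivWithinAt.continuousOn hβ)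
  have hlh : β t₀ ≤ h := (hmin (left_mem_Icc.2 hab)).trans hβh
  obtain ⟨z, hza, hz⟩ := exists_isIntegralCurveOn_Icc_IccExtend hF hlh hab h
  have hz_le : ∀ t ∈ Icc a b, z t ≤ h :=
    le_of_hasDerivWithinAt_lt_of_eq hz (fun t _ => hasDerivWithinAt_const t _ h) hza.le
      fun t _ heq => by simpa only [heq, IccExtend_right, domRestrict_apply] using hFh
  have hle_z : ∀ t ∈ Icc a b, β t ≤ z t :=
    le_of_hasDerivWithinAt_lt_of_eq hβ hz (hβh.trans_eq hza.symm) fun t ht heq => by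
      have ht' := Ico_subset_Icc_self ht
      have hβ_mem : β t ∈ Icc (β t₀) h := ⟨hmin ht', heq.trans_le (hz_le t ht')⟩
      simpa only [← heq, IccExtend_of_mem _ _ hβ_mem, domRestrict_apply] using hsub t ht'
  refine ⟨z, hza, fun t ht => ?_, fun t ht => ⟨hle_z t ht, hz_le t ht⟩⟩
  have hz_mem : z t ∈ Icc (β t₀) h := ⟨(hmin ht).trans (hle_z t ht), hz_le t ht⟩
  simpa only [IccExtend_of_mem _ _ hz_mem, domRestrict_apply] using hz t ht

end ForwardEquation

section BackwardEquation

/-- `y` is a continuous solution on `[0, T]` of the autonomous backward equation with generator `F`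
and terminal value `h`, in integral form. Nothing is asked of `y` outside `[0, T]`. -/
def IsBackwardSolution {E : Type*} [NormedAddCommGroup E] [NormedSpace ℝ E]
    (F : E → E) (h : E) (T : ℝ) (y : ℝ → E) : Prop :=
  ContinuousOn y (Icc 0 T) ∧ ∀ t ∈ Icc 0 T, y t = h + ∫ s in t..T, F (y s)

lemma isBackwardSolution_comp_sub_left {E : Type*} [NormedAddCommGroup E] [NormedSpace ℝ E]
    [CompleteSpace E] {F : E → E} {T : ℝ} {z : ℝ → E} (hF : Continuous F)
    (hz : IsIntegralCurveOn z (fun _ => F) (Icc 0 T)) :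
    IsBackwardSolution F (z 0) T (fun t => z (T - t)) := by
  have hmaps : MapsTo (fun t => T - t) (Icc 0 T) (Icc 0 T) :=
    fun t ht => ⟨sub_nonneg.2 ht.2, sub_le_self T ht.1⟩
  refine ⟨hz.continuousOn.comp (by fun_prop) hmaps, fun t ht => ?_⟩
  have hsub : uIcc 0 (T - t) ⊆ Icc 0 T :=
    uIcc_subset_Icc (left_mem_Icc.2 (ht.1.trans ht.2)) (hmaps ht)
  have hpicard : ODE.picard (fun _ => F) 0 (z 0) z (T - t) = z (T - t) :=
    ODE.picard_eq_of_hasDerivAt (u := univ) (hF.comp continuous_snd).continuousOn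
      (hz.mono hsub) (mapsTo_univ _ _)
  calc z (T - t) = z 0 + ∫ s in 0..(T - t), F (z s) := hpicard.symm
    _ = z 0 + ∫ s in t..T, F (z (T - s)) := by
      rw [intervalIntegral.integral_comp_sub_left (fun s => F (z s)), sub_self]

theorem exists_isBackwardSolution_of_neg_mul_lt {F : ℝ → ℝ} {T h b₀ L : ℝ}
    (hF : LocallyLipschitz F) (hT : 0 ≤ T) (hFh : F h ≤ 0) (hb₀ : 0 ≤ b₀) (hL : 0 ≤ L)
    (hb₀h : -b₀ ≤ h)
    (hgrowth : ∀ b ∈ Icc b₀ (b₀ * Real.exp (L * T)), -(L * b) < F (-b)) :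
    ∃ y : ℝ → ℝ, IsBackwardSolution F h T y ∧
      ∀ t ∈ Icc 0 T, y t ∈ Icc (-(b₀ * Real.exp (L * T))) h := by
  set B : ℝ → ℝ := fun t => b₀ * Real.exp (L * t) with hB
  have hB_mono : Monotone B := fun s t hst => by simp only [hB]; gcongr
  have hB_zero : B 0 = b₀ := by simp [hB]
  have hB_deriv (t : ℝ) : HasDerivAt B (L * B t) t :=
    (((hasDerivAt_id t).const_mul L).exp.const_mul b₀).congr_deriv <| by
      simp only [hB, id, mul_one]; ring
  obtain ⟨z, hz0, hz, hz_mem⟩ := exists_isIntegralCurveOn_Icc_mem_Icc_of_subsolution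
    (β := fun t => -B t) hF hT hFh (by rwa [hB_zero])
    (fun t _ => (hB_deriv t).neg.hasDerivWithinAt)
    (fun t ht => hgrowth (B t) ⟨hB_zero.symm.trans_le (hB_mono ht.1), hB_mono ht.2⟩)
  refine ⟨fun t => z (T - t), hz0 ▸ isBackwardSolution_comp_sub_left hF.continuous hz,
    fun t ht => ?_⟩
  have hTt : T - t ≤ T := sub_le_self T ht.1
  have hz_mem' := hz_mem (T - t) ⟨sub_nonneg.2 ht.2, hTt⟩
  exact ⟨(neg_le_neg (hB_mono hTt)).trans hz_mem'.1, hz_mem'.2⟩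

end BackwardEquation

lemma neg_mul_lt_cubic_neg {f1 a1 a2 a3 b C K ε : ℝ} (hf1 : -K ≤ f1) (ha1 : a1 ≤ K)
    (ha3 : a3 ≤ ε) (ha2 : -ε ≤ a2) (hε : 0 ≤ ε) (hεC : ε * (C + C ^ 2) ≤ 1)
    (hb : 0 < b) (hKb : K < b) (hbC : b ≤ C) :
    -((K + 2) * b) < f1 + a1 * (-b) + a2 * (-b) ^ 2 + a3 * (-b) ^ 3 := by
  have linear : a1 * b ≤ K * b := by gcongr
  have quadratic : -ε * b ^ 2 ≤ a2 * b ^ 2 := by gcongr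
  have cubic : a3 * b ^ 3 ≤ ε * b ^ 3 := by gcongr
  have higher_order : ε * b ^ 2 + ε * b ^ 3 ≤ b := calc
    ε * b ^ 2 + ε * b ^ 3 = b * (ε * (b + b ^ 2)) := by ring
    _ ≤ b * (ε * (C + C ^ 2)) := by gcongr
    _ ≤ b := mul_le_of_le_one_right hb.le hεC
  linarith

theorem stmt4_general {T K : ℝ} (hT : 0 ≤ T) (hK : 0 ≤ K) :
    ∃ ε : ℝ, 0 < ε ∧ ∃ C : ℝ, 0 < C ∧
      ∀ f1 a1 a2 a3 h : ℝ,
        -K ≤ f1 → a1 ≤ K → -K ≤ h → a3 ≤ ε → -ε ≤ a2 →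
        f1 + a1 * h + a2 * h ^ 2 + a3 * h ^ 3 ≤ 0 →
        ∃ y : ℝ → ℝ,
          IsBackwardSolution (fun x => f1 + a1 * x + a2 * x ^ 2 + a3 * x ^ 3) h T y ∧
          ∀ t ∈ Icc 0 T, y t ∈ Icc (-C) h := by
  set C := (K + 1) * Real.exp ((K + 2) * T)
  have hC : 0 < C := by positivity
  refine ⟨1 / (C + C ^ 2), by positivity, C, hC, fun f1 a1 a2 a3 h hf1 ha1 hh ha3 ha2 hFh => ?_⟩
  have hF : ContDiff ℝ 1 fun x : ℝ => f1 + a1 * x + a2 * x ^ 2 + a3 * x ^ 3 := by fun_prop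
  refine exists_isBackwardSolution_of_neg_mul_lt (b₀ := K + 1) (L := K + 2) hF.locallyLipschitz
    hT hFh (by linarith) (by linarith) (by linarith) fun b hb => ?_
  exact neg_mul_lt_cubic_neg hf1 ha1 ha3 ha2 (by positivity) (by field_simp; rfl)
    (by linarith [hb.1]) (by linarith [hb.1]) hb.2

/-- Bounded solutions on a fixed horizon for cubic generators with small
nonlinear coefficients, case `F(h) < 0` (Theorem 5.4 (iii)). -/
theorem stmt4 :
    ∀ T : ℝ, 0 < T → ∀ K : ℝ, 0 < K →
      ∃ ε : ℝ, 0 < ε ∧ ∃ C : ℝ, 0 < C ∧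
        ∀ f1 a1 a2 a3 h : ℝ,
          |f1| ≤ K → |a1| ≤ K → |h| ≤ K → a3 ≤ ε → -ε ≤ a2 →
          f1 + a1 * h + a2 * h ^ 2 + a3 * h ^ 3 < 0 →
          ∃ y : ℝ → ℝ, ContinuousOn y (Icc 0 T) ∧
            ∀ t ∈ Icc (0:ℝ) T,
              (y t = h + ∫ s in t..T,
                (f1 + a1 * y s + a2 * (y s) ^ 2 + a3 * (y s) ^ 3)) ∧
              -C ≤ y t ∧ y t ≤ h := by
  intro T hT K hK
  obtain ⟨ε, hε, C, hC, hsol⟩ := stmt4_general hT.le hK.le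
  refine ⟨ε, hε, C, hC, fun f1 a1 a2 a3 h hf1 ha1 hh ha3 ha2 hFh => ?_⟩
  obtain ⟨y, hy, hy_mem⟩ := hsol f1 a1 a2 a3 h (neg_le_of_abs_le hf1) (le_of_abs_le ha1)
    (neg_le_of_abs_le hh) ha3 ha2 hFh.le
  exact ⟨y, hy.1, fun t ht => ⟨hy.2 t ht, hy_mem t ht⟩⟩
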